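/- Let γ : ℝ × ℝ → ℝ² be a smooth family of regular plane curves with speed σ(t,s) := ‖∂_s γ(t,s)‖ > 0, unit tangent τ := σ⁻¹∂_sγ, unit normal n := (τ², −τ¹), signed curvature κ := (σ⁻¹∂_s n)·τ, and evolution velocity u := ∂_t γ. Then for all (t,s): ∂_t κ = −n · ( σ⁻¹∂_s( σ⁻¹∂_s u ) ) − 2κ · ( (σ⁻¹∂_s u) · τ ). That is, 𝒟_t κ = −n·∇_τ∇_τ u − 2κ(∇_τ u · τ). -/

import Mathlib

/-- Dot product on `ℝ²`. -/
def dotp (a b : ℝ × ℝ) : ℝ := a.1 * b.1 + a.2 * b.2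

/-- Partial derivative in the time variable of an `ℝ²`-valued function of `(t,s)`. -/
noncomputable def ptd (f : ℝ × ℝ → ℝ × ℝ) (q : ℝ × ℝ) : ℝ × ℝ :=
  deriv (fun t => f (t, q.2)) q.1

/-- Partial derivative in the parameter variable of an `ℝ²`-valued function of `(t,s)`. -/
noncomputable def psd (f : ℝ × ℝ → ℝ × ℝ) (q : ℝ × ℝ) : ℝ × ℝ :=
  deriv (fun s => f (q.1, s)) q.2

/-- Partial derivative in the time variable of a scalar function of `(t,s)`. -/
noncomputable def ptds (f : ℝ × ℝ → ℝ) (q : ℝ × ℝ) : ℝ :=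
  deriv (fun t => f (t, q.2)) q.1

/-!
Write `∇` for the derivative with respect to arclength. Differentiating `σ² = ∂ₛγ · ∂ₛγ` in time
gives `∂ₜσ = σ (∇u · τ)`, so time and arclength derivatives satisfy the commutation relation
`∂ₜ∇f = ∇∂ₜf - (∇u · τ) ∇f`. For `f = γ` this reads `∂ₜτ = ∇u - (∇u · τ) τ`. Since `n · τ = 0`, the
curvature is `κ = -n · ∇τ`; in its time derivative the term `∂ₜn · ∇τ` vanishes, as `∂ₜn` is
tangential and `∇τ` is normal, and `n · ∂ₜ∇τ` is obtained by applying the commutation relation once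
more, to `f = τ`.
-/

section DirectionalDerivative

variable {E F : Type*} [NormedAddCommGroup E] [NormedSpace ℝ E] [NormedAddCommGroup F]
  [NormedSpace ℝ F]

/-- The derivative of `f` in the direction `v`, as a function of the base point. The directions
`(1, 0)` and `(0, 1)` of `ℝ × ℝ` give `∂ₜ` and `∂ₛ`. -/
noncomputable def dirDeriv (v : E) (f : E → F) (q : E) : F :=
  fderiv ℝ f q v

theorem contDiff_dirDeriv {f : E → F} {m k : WithTop ℕ∞} (hf : ContDiff ℝ k f) (hmk : m + 1 ≤ k)
    (v : E) : ContDiff ℝ m (dirDeriv v f) :=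
  (hf.fderiv_right hmk).clm_apply contDiff_const

theorem dirDeriv_dirDeriv_eq_fderiv_fderiv {f : E → F} {q : E} (hf : ContDiffAt ℝ 2 f q)
    (v w : E) : dirDeriv v (dirDeriv w f) q = fderiv ℝ (fderiv ℝ f) q v w := by
  have hd : DifferentiableAt ℝ (fderiv ℝ f) q :=
    (hf.fderiv_right one_add_one_eq_two.le).differentiableAt one_ne_zero
  change fderiv ℝ (fun p => fderiv ℝ f p w) q v = fderiv ℝ (fderiv ℝ f) q v w
  simp [fderiv_clm_apply hd (differentiableAt_const w)]

theorem dirDeriv_comm {f : E → F} {q : E} (hf : ContDiffAt ℝ 2 f q) (v w : E) :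
    dirDeriv v (dirDeriv w f) q = dirDeriv w (dirDeriv v f) q := by
  rw [dirDeriv_dirDeriv_eq_fderiv_fderiv hf, dirDeriv_dirDeriv_eq_fderiv_fderiv hf]
  exact hf.isSymmSndFDerivAt (by simp) v w

theorem dirDeriv_sub {f g : E → F} {q : E} (hf : DifferentiableAt ℝ f q)
    (hg : DifferentiableAt ℝ g q) (v : E) :
    dirDeriv v (fun p => f p - g p) q = dirDeriv v f q - dirDeriv v g q := by
  simp [dirDeriv, fderiv_fun_sub hf hg]

theorem dirDeriv_smul {c : E → ℝ} {f : E → F} {q : E} (hc : DifferentiableAt ℝ c q)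
    (hf : DifferentiableAt ℝ f q) (v : E) :
    dirDeriv v (fun p => c p • f p) q = c q • dirDeriv v f q + dirDeriv v c q • f q := by
  simp [dirDeriv, fderiv_fun_smul hc hf]

theorem deriv_fst_slice_eq_dirDeriv {f : ℝ × ℝ → F} {q : ℝ × ℝ} (hf : DifferentiableAt ℝ f q) :
    deriv (fun t => f (t, q.2)) q.1 = dirDeriv (1, 0) f q :=
  (hf.hasFDerivAt.comp_hasDerivAt q.1
    ((hasDerivAt_id q.1).prodMk (hasDerivAt_const q.1 q.2))).deriv

theorem ptd_eq_dirDeriv {f : ℝ × ℝ → ℝ × ℝ} {q : ℝ × ℝ} (hf : DifferentiableAt ℝ f q) :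
    ptd f q = dirDeriv (1, 0) f q :=
  deriv_fst_slice_eq_dirDeriv hf

theorem ptds_eq_dirDeriv {f : ℝ × ℝ → ℝ} {q : ℝ × ℝ} (hf : DifferentiableAt ℝ f q) :
    ptds f q = dirDeriv (1, 0) f q :=
  deriv_fst_slice_eq_dirDeriv hf

theorem psd_eq_dirDeriv {f : ℝ × ℝ → ℝ × ℝ} {q : ℝ × ℝ} (hf : DifferentiableAt ℝ f q) :
    psd f q = dirDeriv (0, 1) f q :=
  (hf.hasFDerivAt.comp_hasDerivAt q.2
    ((hasDerivAt_const q.2 q.1).prodMk (hasDerivAt_id q.2))).deriv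

end DirectionalDerivative

section DotProduct

theorem dotp_comm (a b : ℝ × ℝ) : dotp a b = dotp b a := by
  simp only [dotp]; ring

theorem dotp_sub_right (a b c : ℝ × ℝ) : dotp a (b - c) = dotp a b - dotp a c := by
  simp only [dotp, Prod.fst_sub, Prod.snd_sub]; ring

theorem dotp_add_right (a b c : ℝ × ℝ) : dotp a (b + c) = dotp a b + dotp a c := by
  simp only [dotp, Prod.fst_add, Prod.snd_add]; ring

theorem dotp_smul_left (r : ℝ) (a b : ℝ × ℝ) : dotp (r • a) b = r * dotp a b := by
  simp only [dotp, Prod.smul_fst, Prod.smul_snd, smul_eq_mul]; ring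

theorem dotp_smul_right (r : ℝ) (a b : ℝ × ℝ) : dotp a (r • b) = r * dotp a b := by
  rw [dotp_comm, dotp_smul_left, dotp_comm]

/-- The clockwise rotation by `π / 2`, which takes the unit tangent to the unit normal. -/
def rotateCW (a : ℝ × ℝ) : ℝ × ℝ := (a.2, -a.1)

theorem dotp_rotateCW_self (a : ℝ × ℝ) : dotp (rotateCW a) a = 0 := by
  simp only [dotp, rotateCW]; ring

theorem dotp_rotateCW_rotateCW (a b : ℝ × ℝ) : dotp (rotateCW a) (rotateCW b) = dotp a b := by
  simp only [dotp, rotateCW]; ring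

theorem dotp_self_mul_dotp (e a b : ℝ × ℝ) :
    dotp e e * dotp a b
      = dotp a e * dotp b e + dotp a (rotateCW e) * dotp b (rotateCW e) := by
  simp only [dotp, rotateCW]; ring

variable {E : Type*} [NormedAddCommGroup E] [NormedSpace ℝ E]

theorem contDiff_dotp {f g : E → ℝ × ℝ} {m : WithTop ℕ∞} (hf : ContDiff ℝ m f)
    (hg : ContDiff ℝ m g) : ContDiff ℝ m fun p => dotp (f p) (g p) :=
  (hf.fst.mul hg.fst).add (hf.snd.mul hg.snd)

theorem dirDeriv_dotp {f g : E → ℝ × ℝ} {q : E} (hf : DifferentiableAt ℝ f q)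
    (hg : DifferentiableAt ℝ g q) (v : E) :
    dirDeriv v (fun p => dotp (f p) (g p)) q
      = dotp (dirDeriv v f q) (g q) + dotp (f q) (dirDeriv v g q) := by
  have h := ((hf.hasFDerivAt.fst.mul hg.hasFDerivAt.fst).add
    (hf.hasFDerivAt.snd.mul hg.hasFDerivAt.snd)).fderiv
  refine (DFunLike.congr_fun h v).trans ?_
  simp only [dotp, dirDeriv, add_apply, smul_apply, ContinuousLinearMap.comp_apply,
    ContinuousLinearMap.coe_fst', ContinuousLinearMap.coe_snd', smul_eq_mul]
  ring

theorem dotp_dirDeriv_eq_neg_of_dotp_const {f g : E → ℝ × ℝ} {q : E} {c : ℝ}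
    (hf : DifferentiableAt ℝ f q) (hg : DifferentiableAt ℝ g q)
    (hc : ∀ p, dotp (f p) (g p) = c) (v : E) :
    dotp (dirDeriv v f q) (g q) = -dotp (f q) (dirDeriv v g q) := by
  have h_const : dirDeriv v (fun p => dotp (f p) (g p)) q = 0 := by
    simp [hc, dirDeriv]
  rw [dirDeriv_dotp hf hg] at h_const
  exact eq_neg_of_add_eq_zero_left h_const

theorem dotp_dirDeriv_self_eq_zero {f : E → ℝ × ℝ} {q : E} {c : ℝ}
    (hf : DifferentiableAt ℝ f q) (hc : ∀ p, dotp (f p) (f p) = c) (v : E) :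
    dotp (dirDeriv v f q) (f q) = 0 := by
  have h := dotp_dirDeriv_eq_neg_of_dotp_const hf hf hc v
  rw [dotp_comm (f q)] at h
  linarith

end DotProduct

section PlaneCurves

variable {E F : Type*} [NormedAddCommGroup E] [NormedSpace ℝ E] [NormedAddCommGroup F]
  [NormedSpace ℝ F] {w : E} {γ : E → ℝ × ℝ} {m k : WithTop ℕ∞}

/-- The Euclidean speed `σ = ‖∂_w γ‖` of a family of plane curves with parameter direction `w`;
the remaining directions of `E` deform the curve. Mathlib's norm on `ℝ × ℝ` is the sup norm, hence
the explicit square root. -/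
noncomputable def speed (w : E) (γ : E → ℝ × ℝ) (q : E) : ℝ :=
  √((dirDeriv w γ q).1 ^ 2 + (dirDeriv w γ q).2 ^ 2)

/-- The tangential derivative `∇_τ f = σ⁻¹ ∂_w f` of `f` along the curves `γ`. -/
noncomputable def arcDeriv (w : E) (γ : E → ℝ × ℝ) (f : E → F) (q : E) : F :=
  (speed w γ q)⁻¹ • dirDeriv w f q

/-- The unit tangent `τ = ∇_τ γ`. -/
noncomputable def unitTangent (w : E) (γ : E → ℝ × ℝ) : E → ℝ × ℝ :=
  arcDeriv w γ γ

/-- The unit normal `n = (τ², -τ¹)`. -/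
noncomputable def unitNormal (w : E) (γ : E → ℝ × ℝ) (q : E) : ℝ × ℝ :=
  rotateCW (unitTangent w γ q)

/-- The signed curvature `κ = (∇_τ n) · τ`. -/
noncomputable def signedCurvature (w : E) (γ : E → ℝ × ℝ) (q : E) : ℝ :=
  dotp (arcDeriv w γ (unitNormal w γ) q) (unitTangent w γ q)

theorem speed_sq (w : E) (γ : E → ℝ × ℝ) (q : E) :
    speed w γ q ^ 2 = dotp (dirDeriv w γ q) (dirDeriv w γ q) := by
  rw [speed, Real.sq_sqrt (by positivity)]
  simp only [dotp]; ring

theorem contDiff_speed (hγ : ContDiff ℝ k γ) (hmk : m + 1 ≤ k) (hpos : ∀ q, 0 < speed w γ q) :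
    ContDiff ℝ m (speed w γ) :=
  have hγ' := contDiff_dirDeriv hγ hmk w
  ((hγ'.fst.pow 2).add (hγ'.snd.pow 2)).sqrt fun q => (Real.sqrt_pos.1 (hpos q)).ne'

theorem contDiff_arcDeriv {f : E → F} (hγ : ContDiff ℝ k γ) (hf : ContDiff ℝ k f)
    (hmk : m + 1 ≤ k) (hpos : ∀ q, 0 < speed w γ q) : ContDiff ℝ m (arcDeriv w γ f) :=
  ((contDiff_speed hγ hmk hpos).inv fun q => (hpos q).ne').smul (contDiff_dirDeriv hf hmk w)

theorem contDiff_unitTangent (hγ : ContDiff ℝ k γ) (hmk : m + 1 ≤ k)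
    (hpos : ∀ q, 0 < speed w γ q) : ContDiff ℝ m (unitTangent w γ) :=
  contDiff_arcDeriv hγ hγ hmk hpos

theorem contDiff_unitNormal (hγ : ContDiff ℝ k γ) (hmk : m + 1 ≤ k)
    (hpos : ∀ q, 0 < speed w γ q) : ContDiff ℝ m (unitNormal w γ) :=
  have hτ := contDiff_unitTangent hγ hmk hpos
  hτ.snd.prodMk hτ.fst.neg

theorem contDiff_signedCurvature (hγ : ContDiff ℝ k γ) (hmk : m + 1 + 1 ≤ k)
    (hpos : ∀ q, 0 < speed w γ q) : ContDiff ℝ m (signedCurvature w γ) :=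
  have hγ' := hγ.of_le (le_self_add.trans hmk)
  contDiff_dotp (contDiff_arcDeriv hγ' (contDiff_unitNormal hγ hmk hpos) le_rfl hpos)
    (contDiff_unitTangent hγ' le_rfl hpos)

theorem differentiable_speed (hγ : ContDiff ℝ 2 γ) (hpos : ∀ q, 0 < speed w γ q) :
    Differentiable ℝ (speed w γ) :=
  (contDiff_speed hγ one_add_one_eq_two.le hpos).differentiable one_ne_zero

theorem differentiable_arcDeriv {f : E → F} (hγ : ContDiff ℝ 2 γ) (hf : ContDiff ℝ 2 f)
    (hpos : ∀ q, 0 < speed w γ q) : Differentiable ℝ (arcDeriv w γ f) :=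
  (contDiff_arcDeriv hγ hf one_add_one_eq_two.le hpos).differentiable one_ne_zero

theorem differentiable_unitTangent (hγ : ContDiff ℝ 2 γ) (hpos : ∀ q, 0 < speed w γ q) :
    Differentiable ℝ (unitTangent w γ) :=
  differentiable_arcDeriv hγ hγ hpos

theorem differentiable_unitNormal (hγ : ContDiff ℝ 2 γ) (hpos : ∀ q, 0 < speed w γ q) :
    Differentiable ℝ (unitNormal w γ) :=
  (contDiff_unitNormal hγ one_add_one_eq_two.le hpos).differentiable one_ne_zero

theorem speed_smul_arcDeriv {q : E} (hq : 0 < speed w γ q) (f : E → F) :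
    speed w γ q • arcDeriv w γ f q = dirDeriv w f q :=
  smul_inv_smul₀ hq.ne' _

theorem dotp_unitTangent_self {q : E} (hq : 0 < speed w γ q) :
    dotp (unitTangent w γ q) (unitTangent w γ q) = 1 := by
  rw [unitTangent, arcDeriv, dotp_smul_left, dotp_smul_right, ← speed_sq]
  field_simp

theorem dotp_unitNormal_self {q : E} (hq : 0 < speed w γ q) :
    dotp (unitNormal w γ q) (unitNormal w γ q) = 1 := by
  rw [unitNormal, dotp_rotateCW_rotateCW, dotp_unitTangent_self hq]

theorem dotp_unitNormal_unitTangent (w : E) (γ : E → ℝ × ℝ) (q : E) :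
    dotp (unitNormal w γ q) (unitTangent w γ q) = 0 :=
  dotp_rotateCW_self _

theorem dotp_eq_add_unitTangent_unitNormal {q : E} (hq : 0 < speed w γ q) (a b : ℝ × ℝ) :
    dotp a b = dotp a (unitTangent w γ q) * dotp b (unitTangent w γ q)
      + dotp a (unitNormal w γ q) * dotp b (unitNormal w γ q) := by
  rw [unitNormal, ← dotp_self_mul_dotp, dotp_unitTangent_self hq, one_mul]

theorem dirDeriv_speed (hγ : ContDiff ℝ 2 γ) (hpos : ∀ q, 0 < speed w γ q) (v q : E) :
    dirDeriv v (speed w γ) q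
      = speed w γ q * dotp (arcDeriv w γ (dirDeriv v γ) q) (unitTangent w γ q) := by
  have hσ := differentiable_speed hγ hpos q
  have hγ' : DifferentiableAt ℝ (dirDeriv w γ) q :=
    (contDiff_dirDeriv hγ one_add_one_eq_two.le w).differentiable one_ne_zero q
  have hsq : 2 * speed w γ q * dirDeriv v (speed w γ) q
      = 2 * dotp (dirDeriv v (dirDeriv w γ) q) (dirDeriv w γ q) := by
    calc 2 * speed w γ q * dirDeriv v (speed w γ) q
        = dirDeriv v (fun p => speed w γ p ^ 2) q := by
          simp [dirDeriv, fderiv_fun_pow 2 hσ]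
      _ = dirDeriv v (fun p => dotp (dirDeriv w γ p) (dirDeriv w γ p)) q := by
          simp only [speed_sq]
      _ = 2 * dotp (dirDeriv v (dirDeriv w γ) q) (dirDeriv w γ q) := by
          rw [dirDeriv_dotp hγ' hγ', dotp_comm (dirDeriv w γ q), two_mul]
  rw [dirDeriv_comm hγ.contDiffAt, ← speed_smul_arcDeriv (hpos q), ← speed_smul_arcDeriv (hpos q) γ,
    dotp_smul_left, dotp_smul_right] at hsq
  exact mul_left_cancel₀ (mul_pos two_pos (hpos q)).ne' (hsq.trans (by rw [unitTangent]; ring))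

theorem dirDeriv_arcDeriv {f : E → F} (hγ : ContDiff ℝ 2 γ) (hf : ContDiff ℝ 2 f)
    (hpos : ∀ q, 0 < speed w γ q) (v q : E) :
    dirDeriv v (arcDeriv w γ f) q = arcDeriv w γ (dirDeriv v f) q
      - dotp (arcDeriv w γ (dirDeriv v γ) q) (unitTangent w γ q) • arcDeriv w γ f q := by
  have hσ := differentiable_speed hγ hpos q
  have hf' := differentiable_arcDeriv hγ hf hpos q
  have hprod : speed w γ q • dirDeriv v (arcDeriv w γ f) q
      + dirDeriv v (speed w γ) q • arcDeriv w γ f q = dirDeriv w (dirDeriv v f) q := by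
    rw [← dirDeriv_smul hσ hf', dirDeriv_comm hf.contDiffAt w v]
    congr 1
    exact funext fun p => speed_smul_arcDeriv (hpos p) f
  rw [dirDeriv_speed hγ hpos, ← speed_smul_arcDeriv (hpos q), mul_smul, ← smul_add] at hprod
  exact eq_sub_of_add_eq (smul_right_injective F (hpos q).ne' hprod)

theorem dirDeriv_unitTangent (hγ : ContDiff ℝ 2 γ) (hpos : ∀ q, 0 < speed w γ q) (v q : E) :
    dirDeriv v (unitTangent w γ) q = arcDeriv w γ (dirDeriv v γ) q
      - dotp (arcDeriv w γ (dirDeriv v γ) q) (unitTangent w γ q) • unitTangent w γ q :=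
  dirDeriv_arcDeriv hγ hγ hpos v q

theorem signedCurvature_eq_neg_dotp_unitNormal (hγ : ContDiff ℝ 2 γ)
    (hpos : ∀ q, 0 < speed w γ q) (q : E) :
    signedCurvature w γ q = -dotp (unitNormal w γ q) (arcDeriv w γ (unitTangent w γ) q) := by
  have hτ := differentiable_unitTangent hγ hpos q
  have hn := differentiable_unitNormal hγ hpos q
  rw [signedCurvature, arcDeriv, arcDeriv, dotp_smul_left, dotp_smul_right,
    dotp_dirDeriv_eq_neg_of_dotp_const hn hτ (dotp_unitNormal_unitTangent w γ), mul_neg]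

theorem dotp_dirDeriv_unitNormal_arcDeriv_unitTangent (hγ : ContDiff ℝ 2 γ)
    (hpos : ∀ q, 0 < speed w γ q) (v q : E) :
    dotp (dirDeriv v (unitNormal w γ) q) (arcDeriv w γ (unitTangent w γ) q) = 0 := by
  have hτ := differentiable_unitTangent hγ hpos q
  have hn := differentiable_unitNormal hγ hpos q
  have hττ : dotp (arcDeriv w γ (unitTangent w γ) q) (unitTangent w γ q) = 0 := by
    rw [arcDeriv, dotp_smul_left,
      dotp_dirDeriv_self_eq_zero hτ fun p => dotp_unitTangent_self (hpos p), mul_zero]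
  have hnn : dotp (dirDeriv v (unitNormal w γ) q) (unitNormal w γ q) = 0 :=
    dotp_dirDeriv_self_eq_zero hn (fun p => dotp_unitNormal_self (hpos p)) v
  rw [dotp_eq_add_unitTangent_unitNormal (hpos q), hττ, hnn, mul_zero, zero_mul, add_zero]

theorem dotp_unitNormal_arcDeriv_dirDeriv_unitTangent (hγ : ContDiff ℝ 3 γ)
    (hpos : ∀ q, 0 < speed w γ q) (v q : E) :
    dotp (unitNormal w γ q) (arcDeriv w γ (dirDeriv v (unitTangent w γ)) q)
      = dotp (unitNormal w γ q) (arcDeriv w γ (arcDeriv w γ (dirDeriv v γ)) q)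
        + signedCurvature w γ q
          * dotp (arcDeriv w γ (dirDeriv v γ) q) (unitTangent w γ q) := by
  have hγ₂ : ContDiff ℝ 2 γ := hγ.of_le (by norm_num)
  have hτ : ContDiff ℝ 1 (unitTangent w γ) :=
    contDiff_unitTangent hγ₂ one_add_one_eq_two.le hpos
  have hu : ContDiff ℝ 1 (arcDeriv w γ (dirDeriv v γ)) :=
    contDiff_arcDeriv hγ₂ (contDiff_dirDeriv hγ two_add_one_eq_three.le v)
      one_add_one_eq_two.le hpos
  have hc := contDiff_dotp hu hτ
  have hcτ := hc.smul hτ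
  rw [signedCurvature_eq_neg_dotp_unitNormal hγ₂ hpos, arcDeriv,
    funext (dirDeriv_unitTangent hγ₂ hpos v),
    dirDeriv_sub (g := fun p => _ • unitTangent w γ p) (hu.differentiable one_ne_zero q)
      (hcτ.differentiable one_ne_zero q),
    dirDeriv_smul (hc.differentiable one_ne_zero q) (hτ.differentiable one_ne_zero q)]
  simp only [arcDeriv, dotp_smul_right, dotp_sub_right, dotp_add_right,
    dotp_unitNormal_unitTangent]
  ring

theorem dirDeriv_signedCurvature (hγ : ContDiff ℝ 3 γ) (hpos : ∀ q, 0 < speed w γ q)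
    (v q : E) :
    dirDeriv v (signedCurvature w γ) q
      = -dotp (unitNormal w γ q) (arcDeriv w γ (arcDeriv w γ (dirDeriv v γ)) q)
        - 2 * signedCurvature w γ q
          * dotp (arcDeriv w γ (dirDeriv v γ) q) (unitTangent w γ q) := by
  have hγ₂ : ContDiff ℝ 2 γ := hγ.of_le (by norm_num)
  have hτ : ContDiff ℝ 2 (unitTangent w γ) :=
    contDiff_unitTangent hγ two_add_one_eq_three.le hpos
  have hn := differentiable_unitNormal hγ₂ hpos q
  have hk := differentiable_arcDeriv hγ₂ hτ hpos q
  have hκ := signedCurvature_eq_neg_dotp_unitNormal hγ₂ hpos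
  calc dirDeriv v (signedCurvature w γ) q
      = -dirDeriv v (fun p => dotp (unitNormal w γ p) (arcDeriv w γ (unitTangent w γ) p)) q := by
        rw [funext hκ]
        simp [dirDeriv]
    _ = -dotp (unitNormal w γ q) (dirDeriv v (arcDeriv w γ (unitTangent w γ)) q) := by
        rw [dirDeriv_dotp hn hk, dotp_dirDeriv_unitNormal_arcDeriv_unitTangent hγ₂ hpos, zero_add]
    _ = _ := by
        rw [dirDeriv_arcDeriv hγ₂ hτ hpos, dotp_sub_right, dotp_smul_right,
          dotp_unitNormal_arcDeriv_dirDeriv_unitTangent hγ hpos]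
        linear_combination
          dotp (arcDeriv w γ (dirDeriv v γ) q) (unitTangent w γ q) * hκ q

end PlaneCurves

theorem evolution_of_curvature_general (γ : ℝ × ℝ → ℝ × ℝ) (hγ : ContDiff ℝ 3 γ)
    (σ : ℝ × ℝ → ℝ)
    (hσ : ∀ q, σ q = Real.sqrt ((psd γ q).1 ^ 2 + (psd γ q).2 ^ 2))
    (hσpos : ∀ q, 0 < σ q)
    (τ n u : ℝ × ℝ → ℝ × ℝ) (κ : ℝ × ℝ → ℝ)
    (hτ : ∀ q, τ q = (σ q)⁻¹ • psd γ q)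
    (hn : ∀ q, n q = ((τ q).2, -(τ q).1))
    (hκ : ∀ q, κ q = dotp ((σ q)⁻¹ • psd n q) (τ q))
    (hu : ∀ q, u q = ptd γ q) :
    ∀ q, ptds κ q
      = -(dotp (n q) ((σ q)⁻¹ • psd (fun q' => (σ q')⁻¹ • psd u q') q))
        - 2 * κ q * dotp ((σ q)⁻¹ • psd u q) (τ q) := by
  have hγ₂ : ContDiff ℝ 2 γ := hγ.of_le (by norm_num)
  have hγ₁ : Differentiable ℝ γ := hγ.differentiable three_ne_zero
  obtain rfl : u = dirDeriv (1, 0) γ :=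
    funext fun p => (hu p).trans (ptd_eq_dirDeriv (hγ₁ p))
  simp only [psd_eq_dirDeriv (hγ₁ _)] at hσ hτ
  obtain rfl : σ = speed (0, 1) γ := funext hσ
  obtain rfl : τ = unitTangent (0, 1) γ := funext hτ
  obtain rfl : n = unitNormal (0, 1) γ := funext hn
  simp only [psd_eq_dirDeriv (differentiable_unitNormal hγ₂ hσpos _)] at hκ
  obtain rfl : κ = signedCurvature (0, 1) γ := funext hκ
  have hu₂ : ContDiff ℝ 2 (dirDeriv (1, 0) γ) :=
    contDiff_dirDeriv hγ two_add_one_eq_three.le (1, 0)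
  have arcDeriv_velocity : (fun p => (speed (0, 1) γ p)⁻¹ • psd (dirDeriv (1, 0) γ) p)
      = arcDeriv (0, 1) γ (dirDeriv (1, 0) γ) :=
    funext fun p => congrArg _ (psd_eq_dirDeriv (hu₂.differentiable two_ne_zero p))
  have hκ₁ : ContDiff ℝ 1 (signedCurvature (0, 1) γ) :=
    contDiff_signedCurvature hγ (by norm_num) hσpos
  intro q
  rw [arcDeriv_velocity, psd_eq_dirDeriv (differentiable_arcDeriv hγ₂ hu₂ hσpos q),
    psd_eq_dirDeriv (hu₂.differentiable two_ne_zero q),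
    ptds_eq_dirDeriv (hκ₁.differentiable one_ne_zero q)]
  exact dirDeriv_signedCurvature hγ hσpos (1, 0) q

/-- First-order evolution of the signed curvature of a moving regular plane curve:
`𝒟_t κ = −n·∇_τ∇_τ u − 2κ(∇_τ u · τ)`, where `u = ∂_tγ`, `σ = ‖∂_sγ‖`, `τ = σ⁻¹∂_sγ`,
`n = (τ², −τ¹)`, and `κ = (∇_τ n)·τ`. -/
theorem evolution_of_curvature (γ : ℝ × ℝ → ℝ × ℝ) (hγ : ContDiff ℝ (⊤ : ℕ∞) γ)
    (σ : ℝ × ℝ → ℝ)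
    (hσ : ∀ q, σ q = Real.sqrt ((psd γ q).1 ^ 2 + (psd γ q).2 ^ 2))
    (hσpos : ∀ q, 0 < σ q)
    (τ n u : ℝ × ℝ → ℝ × ℝ) (κ : ℝ × ℝ → ℝ)
    (hτ : ∀ q, τ q = (σ q)⁻¹ • psd γ q)
    (hn : ∀ q, n q = ((τ q).2, -(τ q).1))
    (hκ : ∀ q, κ q = dotp ((σ q)⁻¹ • psd n q) (τ q))
    (hu : ∀ q, u q = ptd γ q) :
    ∀ q, ptds κ q
      = -(dotp (n q) ((σ q)⁻¹ • psd (fun q' => (σ q')⁻¹ • psd u q') q))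
        - 2 * κ q * dotp ((σ q)⁻¹ • psd u q) (τ q) :=
  evolution_of_curvature_general γ (hγ.of_le (WithTop.coe_le_coe.2 le_top)) σ hσ hσpos τ n u κ hτ hn
    hκ hu
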